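/- For every integer n ≥ 2, let A₂ be the set of permutations w of {1,...,n} with w(1) = 2. Then there exists a bijection Ψ₂ from A₂ to A₂ such that for every w ∈ A₂, sign(Ψ₂(w)) = sign(w) and depth(w) = drp(Ψ₂(w)). -/

import Mathlib

open Finset

/-- The one-line notation value of `π` at position `k ∈ {1,…,n}`:
`oneLine π k = π(k)` with `1`-indexed positions and values. -/
def oneLine {n : ℕ} (π : Equiv.Perm (Fin n)) (k : ℕ) : ℕ :=
  if h : k - 1 < n then ((π ⟨k - 1, h⟩ : Fin n) : ℕ) + 1 else k

/-- `SUC(π) = {i ∈ {1,…,n-1} : π(i+1) = π(i)+1}` (position set). -/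
def SUC {n : ℕ} (π : Equiv.Perm (Fin n)) : Finset ℕ :=
  (Finset.Icc 1 (n - 1)).filter (fun i => oneLine π (i + 1) = oneLine π i + 1)

/-- `FIX(π) = {i ∈ {1,…,n-1} : π(i) = i}` (position set). -/
def FIX {n : ℕ} (π : Equiv.Perm (Fin n)) : Finset ℕ :=
  (Finset.Icc 1 (n - 1)).filter (fun i => oneLine π i = i)

/-- `Asc₂(π) = {π(i+1) : i ∈ {1,…,n-1}, π(i+1) ≥ π(i)+2}` (value set). -/
def Asc2 {n : ℕ} (π : Equiv.Perm (Fin n)) : Finset ℕ :=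
  ((Finset.Icc 1 (n - 1)).filter (fun i => oneLine π i + 2 ≤ oneLine π (i + 1))).image
    (fun i => oneLine π (i + 1))

/-- `Des(π) = {π(i+1) : i ∈ {1,…,n-1}, π(i) > π(i+1)}` (value set). -/
def DesSet {n : ℕ} (π : Equiv.Perm (Fin n)) : Finset ℕ :=
  ((Finset.Icc 1 (n - 1)).filter (fun i => oneLine π (i + 1) < oneLine π i)).image
    (fun i => oneLine π (i + 1))

/-- `Suc(π) = {π(i+1) : i ∈ {1,…,n-1}, π(i+1) = π(i)+1}` (value set). -/
def SucSet {n : ℕ} (π : Equiv.Perm (Fin n)) : Finset ℕ :=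
  ((Finset.Icc 1 (n - 1)).filter (fun i => oneLine π (i + 1) = oneLine π i + 1)).image
    (fun i => oneLine π (i + 1))

/-- `Aexc(π) = {π(i) : i ∈ {2,…,n}, π(i) < i}` (value set). -/
def Aexc {n : ℕ} (π : Equiv.Perm (Fin n)) : Finset ℕ :=
  ((Finset.Icc 2 n).filter (fun i => oneLine π i < i)).image (fun i => oneLine π i)

/-- `Êxc(π) = {π(i) : i ∈ {2,…,n}, π(i) > i}` (value set). -/
def ExcHat {n : ℕ} (π : Equiv.Perm (Fin n)) : Finset ℕ :=
  ((Finset.Icc 2 n).filter (fun i => i < oneLine π i)).image (fun i => oneLine π i)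

/-- `F̂ix(π) = {π(i) : i ∈ {2,…,n}, π(i) = i}` (value set). -/
def FixHat {n : ℕ} (π : Equiv.Perm (Fin n)) : Finset ℕ :=
  ((Finset.Icc 2 n).filter (fun i => oneLine π i = i)).image (fun i => oneLine π i)

/-- `depth(π) = ∑_{i : π(i) > i} (π(i) − i)`. -/
def depthStat {n : ℕ} (π : Equiv.Perm (Fin n)) : ℕ :=
  ∑ i ∈ (Finset.Icc 1 n).filter (fun i => i < oneLine π i), (oneLine π i - i)

/-- `drp(π) = ∑_{i ∈ {1,…,n-1} : π(i) > π(i+1)} (π(i) − π(i+1))`. -/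
def drpStat {n : ℕ} (π : Equiv.Perm (Fin n)) : ℕ :=
  ∑ i ∈ (Finset.Icc 1 (n - 1)).filter (fun i => oneLine π (i + 1) < oneLine π i),
    (oneLine π i - oneLine π (i + 1))

/-- `exc(π) = |{i ∈ {1,…,n} : π(i) > i}|`. -/
def excNum {n : ℕ} (π : Equiv.Perm (Fin n)) : ℕ :=
  ((Finset.Icc 1 n).filter (fun i => i < oneLine π i)).card

/-- `nexc(π) = |{i ∈ {1,…,n} : π(i) < i}|`. -/
def nexcNum {n : ℕ} (π : Equiv.Perm (Fin n)) : ℕ :=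
  ((Finset.Icc 1 n).filter (fun i => oneLine π i < i)).card

/-- `des(π) = |{i ∈ {1,…,n-1} : π(i) > π(i+1)}|`. -/
def desNum {n : ℕ} (π : Equiv.Perm (Fin n)) : ℕ :=
  ((Finset.Icc 1 (n - 1)).filter (fun i => oneLine π (i + 1) < oneLine π i)).card

/-- `asc(π) = |{i ∈ {1,…,n-1} : π(i) < π(i+1)}|`. -/
def ascNum {n : ℕ} (π : Equiv.Perm (Fin n)) : ℕ :=
  ((Finset.Icc 1 (n - 1)).filter (fun i => oneLine π i < oneLine π (i + 1))).card

/-- `inv(π) = |{(i,j) : 1 ≤ i < j ≤ n, π(i) > π(j)}|`. -/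
def invNum {n : ℕ} (π : Equiv.Perm (Fin n)) : ℕ :=
  (((Finset.Icc 1 n) ×ˢ (Finset.Icc 1 n)).filter
    (fun p : ℕ × ℕ => p.1 < p.2 ∧ oneLine π p.2 < oneLine π p.1)).card

/-!
Deleting the first letter identifies `A₂` with the permutations of one point less; this lowers depth
and drop by `1` each and reverses the sign. On all permutations, the joint distribution of the sign
and a statistic `S` is determined by the polynomials `∑ X ^ S w` and `∑ sign w * X ^ S w`, and for
depth and drop both polynomials agree:

* Inserting a new least value `0` (and raising the others by `1`) into the arrow `i → w i` of the
  cycle diagram raises the depth by `min i (w i)`, and inserting it into the gap between the letters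
  `a`, `b` of a word raises the drop by `min a b`; in both cases the minimum `c` concerned is
  replaced by two copies of `0`. So the pairs (statistic, multiset of minima) obey one recursion.
* Exchanging the values `0` and `1` reverses the sign and preserves both statistics unless the first
  letter is `0` or `1`, when it changes them by `1`. So the signed sum acquires a factor `1 - X`
  with each new point.
-/

open Equiv Equiv.Perm Polynomial

/-! ### Inserting a new least value -/

/-- The sum of the drops `a - b` over the consecutive entries `a`, `b` of a word; by truncated
subtraction the ascents contribute `0`. -/
def dropSum : List ℕ → ℕ
  | [] => 0
  | [_] => 0
  | a :: b :: l => (a - b) + dropSum (b :: l)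

/-- The multiset of the minima of consecutive entries of a word followed by infinity: what the drop
sum gains when a `0` is inserted into each of the gaps after the first entry. -/
def gapMins : List ℕ → Multiset ℕ
  | [] => 0
  | [a] => {a}
  | a :: b :: l => min a b ::ₘ gapMins (b :: l)

/-- The total excess of a permutation of `{0, …, m - 1}`, that is, its depth. -/
def excSum {m : ℕ} (e : Perm (Fin m)) : ℕ := ∑ i, ((e i : ℕ) - i)

/-- The multiset of the minima of the arrows `i → e i` of a permutation: the analogue of `gapMins`
for inserting a new least point into an arrow of the cycle diagram. -/
def arrowMins {m : ℕ} (e : Perm (Fin m)) : Multiset ℕ :=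
  (univ : Finset (Fin m)).val.map fun i => min (e i : ℕ) i

/-- The one-line notation of a permutation of `{0, …, m - 1}`. -/
def word {m : ℕ} (e : Perm (Fin m)) : List ℕ := List.ofFn fun i => (e i : ℕ)

/-- The pairs (sum, multiset of minima) obtained from a given one by inserting a new least value `0`
in all possible ways: either at no cost, or splitting one of the minima `c` at cost `c`. -/
def insertZero (s : ℕ × Multiset ℕ) : Multiset (ℕ × Multiset ℕ) :=
  (s.1, 0 ::ₘ s.2) ::ₘ s.2.map fun c => (s.1 + c, 0 ::ₘ 0 ::ₘ s.2.erase c)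

theorem dropSum_zero_cons (l : List ℕ) : dropSum (0 :: l) = dropSum l := by
  cases l <;> simp [dropSum]

theorem gapMins_zero_cons (l : List ℕ) : gapMins (0 :: l) = 0 ::ₘ gapMins l := by
  cases l <;> simp [gapMins]

theorem dropSum_map_succ : ∀ l : List ℕ, dropSum (l.map Nat.succ) = dropSum l
  | [] => rfl
  | [_] => rfl
  | a :: b :: l => by
    have ih := dropSum_map_succ (b :: l)
    simp only [List.map_cons, dropSum, Nat.succ_sub_succ] at ih ⊢
    rw [ih]

theorem gapMins_map_succ : ∀ l : List ℕ, gapMins (l.map Nat.succ) = (gapMins l).map Nat.succ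
  | [] => rfl
  | [_] => rfl
  | a :: b :: l => by
    have ih := gapMins_map_succ (b :: l)
    simp only [List.map_cons, gapMins, Multiset.map_cons, Nat.succ_min_succ] at ih ⊢
    rw [ih]

theorem map_cons_permutations'Aux_zero (a : ℕ) (l : List ℕ) :
    (l.permutations'Aux 0 : Multiset (List ℕ)).map
        (fun l' => (dropSum (a :: l'), gapMins (a :: l'))) =
      (gapMins (a :: l)).map fun c =>
        (dropSum (a :: l) + c, 0 ::ₘ 0 ::ₘ (gapMins (a :: l)).erase c) := by
  induction l generalizing a with
  | nil => simp [List.permutations'Aux, dropSum, gapMins]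
  | cons b l ih =>
    have insert_after_head :
        (dropSum (a :: 0 :: b :: l), gapMins (a :: 0 :: b :: l)) =
          (dropSum (a :: b :: l) + min a b, 0 ::ₘ 0 ::ₘ gapMins (b :: l)) := by
      have cost : a - b + min a b = a := by omega
      simp only [dropSum, gapMins, Nat.min_zero, Nat.zero_min, Nat.sub_zero, Nat.zero_sub,
        Nat.zero_add]
      rw [add_right_comm, cost]
    have insert_later := congrArg (Multiset.map (Prod.map (a - b + ·) (min a b ::ₘ ·))) (ih b)
    rw [Multiset.map_map, Multiset.map_map] at insert_later
    rw [List.permutations'Aux, ← Multiset.cons_coe, ← Multiset.map_coe, Multiset.map_cons,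
      Multiset.map_map, insert_after_head]
    refine (congrArg _ insert_later).trans ?_
    rw [gapMins, Multiset.map_cons, Multiset.erase_cons_head]
    refine congrArg _ (Multiset.map_congr rfl fun c hc => ?_)
    rw [Multiset.erase_cons_tail_of_mem hc, Function.comp_apply, Prod.map_apply, dropSum, add_assoc,
      Multiset.cons_swap (min a b) 0, Multiset.cons_swap (min a b) 0]

theorem map_permutations'Aux_zero (l : List ℕ) :
    (l.permutations'Aux 0 : Multiset (List ℕ)).map (fun l' => (dropSum l', gapMins l')) =
      insertZero (dropSum l, gapMins l) := by
  cases l with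
  | nil => simp [List.permutations'Aux, dropSum, gapMins, insertZero]
  | cons a l =>
    rw [List.permutations'Aux, ← Multiset.cons_coe, ← Multiset.map_coe, Multiset.map_cons,
      Multiset.map_map, insertZero, dropSum_zero_cons, gapMins_zero_cons]
    exact congrArg _ (map_cons_permutations'Aux_zero a l)

theorem map_permutations'_range_succ (m : ℕ) :
    ((List.range (m + 1)).permutations' : Multiset (List ℕ)).map
        (fun l => (dropSum l, gapMins l)) =
      ((List.range m).permutations' : Multiset (List ℕ)).bind
        fun l => insertZero (dropSum l, (gapMins l).map Nat.succ) := by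
  rw [List.range_succ_eq_map, List.permutations', ← List.map_permutations', ← Multiset.coe_bind,
    ← Multiset.map_coe, Multiset.bind_map, Multiset.map_bind]
  simp_rw [map_permutations'Aux_zero, dropSum_map_succ, gapMins_map_succ]

theorem map_univ_perm_fin_succ {α : Type*} {m : ℕ} (F : Perm (Fin (m + 1)) → α) :
    (univ : Finset (Perm (Fin (m + 1)))).val.map F =
      (univ : Finset (Perm (Fin m))).val.bind fun e =>
        F (decomposeFin.symm (0, e)) ::ₘ
          (univ : Finset (Fin m)).val.map fun i => F (decomposeFin.symm ((e i).succ, e)) := by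
  have fiber (e : Perm (Fin m)) :
      F (decomposeFin.symm (0, e)) ::ₘ
          (univ : Finset (Fin m)).val.map (fun i => F (decomposeFin.symm ((e i).succ, e))) =
        (univ : Finset (Fin (m + 1))).val.map fun p => F (decomposeFin.symm (p, e)) := by
    have reindex := congrArg (Multiset.map fun j => F (decomposeFin.symm (j.succ, e)))
      (Multiset.map_univ_val_equiv e)
    rw [Multiset.map_map] at reindex
    rw [Fin.univ_succ, cons_val, Multiset.map_cons, map_val, Multiset.map_map]
    exact congrArg _ reindex
  simp_rw [fiber]
  rw [univ_perm_fin_succ, map_val, Multiset.map_map, ← univ_product_univ, product_val,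
    Multiset.bind_map_comm]
  simp [SProd.sprod, Multiset.product, Multiset.map_bind]

section

variable {m : ℕ} (e : Perm (Fin m))

theorem excSum_decomposeFin_symm_zero : excSum (decomposeFin.symm (0, e)) = excSum e := by
  simp [excSum, Fin.sum_univ_succ]

theorem arrowMins_decomposeFin_symm_zero :
    arrowMins (decomposeFin.symm (0, e)) = 0 ::ₘ (arrowMins e).map Nat.succ := by
  simp [arrowMins, Fin.univ_succ, Function.comp_def]

theorem decomposeFin_symm_succ_apply_self (i : Fin m) :
    decomposeFin.symm ((e i).succ, e) i.succ = 0 := by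
  simp

theorem decomposeFin_symm_succ_apply_of_ne {i k : Fin m} (h : k ≠ i) :
    decomposeFin.symm ((e i).succ, e) k.succ = (e k).succ := by
  rw [decomposeFin_symm_apply_succ, swap_apply_of_ne_of_ne (Fin.succ_ne_zero _)]
  simpa using h

theorem excSum_decomposeFin_symm_succ (i : Fin m) :
    excSum (decomposeFin.symm ((e i).succ, e)) = excSum e + (min (e i : ℕ) i).succ := by
  have unchanged : ∀ k ∈ univ.erase i,
      ((decomposeFin.symm ((e i).succ, e) k.succ : ℕ) - (k.succ : ℕ)) = (e k : ℕ) - k := by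
    intro k hk
    rw [decomposeFin_symm_succ_apply_of_ne e (ne_of_mem_erase hk), Fin.val_succ, Fin.val_succ,
      Nat.succ_sub_succ]
  rw [excSum, excSum, Fin.sum_univ_succ, ← add_sum_erase _ _ (mem_univ i),
    sum_congr rfl unchanged, ← add_sum_erase _ _ (mem_univ i)]
  simp only [decomposeFin_symm_apply_zero, decomposeFin_symm_succ_apply_self, Fin.val_succ,
    Fin.val_zero, Nat.sub_zero, Nat.zero_sub, zero_add]
  omega

theorem arrowMins_decomposeFin_symm_succ (i : Fin m) :
    arrowMins (decomposeFin.symm ((e i).succ, e)) =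
      0 ::ₘ 0 ::ₘ ((arrowMins e).map Nat.succ).erase (min (e i : ℕ) i).succ := by
  have unchanged : ∀ k ∈ univ.erase i,
      min (decomposeFin.symm ((e i).succ, e) k.succ : ℕ) (k.succ : ℕ) =
        (min (e k : ℕ) k).succ := by
    intro k hk
    rw [decomposeFin_symm_succ_apply_of_ne e (ne_of_mem_erase hk), Fin.val_succ, Fin.val_succ,
      Nat.succ_min_succ]
  have univ_eq : (univ : Finset (Fin m)).val = i ::ₘ (univ.erase i).val :=
    (Multiset.cons_erase (mem_univ i)).symm
  rw [arrowMins, arrowMins, Fin.univ_succ, cons_val, map_val, Multiset.map_cons, Multiset.map_map,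
    univ_eq]
  simp only [Multiset.map_cons, Multiset.map_map, Function.comp_def, Multiset.erase_cons_head,
    Function.Embedding.coeFn_mk]
  rw [decomposeFin_symm_apply_zero, decomposeFin_symm_succ_apply_self, Fin.val_zero, Nat.min_zero,
    Nat.zero_min, Multiset.map_congr rfl unchanged]

end

theorem map_excSum_arrowMins_succ (m : ℕ) :
    (univ : Finset (Perm (Fin (m + 1)))).val.map (fun e => (excSum e, arrowMins e)) =
      (univ : Finset (Perm (Fin m))).val.bind
        fun e => insertZero (excSum e, (arrowMins e).map Nat.succ) := by
  rw [map_univ_perm_fin_succ]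
  refine Multiset.bind_congr fun e _ => ?_
  simp_rw [excSum_decomposeFin_symm_zero, arrowMins_decomposeFin_symm_zero,
    excSum_decomposeFin_symm_succ, arrowMins_decomposeFin_symm_succ, insertZero]
  refine congrArg _ ?_
  conv_rhs => enter [2]; rw [arrowMins, Multiset.map_map]
  rw [Multiset.map_map]
  rfl

theorem map_excSum_arrowMins_eq_map_permutations' (m : ℕ) :
    (univ : Finset (Perm (Fin m))).val.map (fun e => (excSum e, arrowMins e)) =
      ((List.range m).permutations' : Multiset (List ℕ)).map
        fun l => (dropSum l, gapMins l) := by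
  induction m with
  | zero => simp [excSum, arrowMins, dropSum, gapMins]
  | succ m ih =>
    have h := congrArg (Multiset.bind · fun s => insertZero (s.1, s.2.map Nat.succ)) ih
    simp only [Multiset.bind_map] at h
    rw [map_excSum_arrowMins_succ, map_permutations'_range_succ, h]

theorem word_injective (m : ℕ) : Function.Injective (word (m := m)) := by
  intro e f h
  ext i
  exact congrFun (List.ofFn_injective h) i

theorem map_univ_word (m : ℕ) :
    (univ : Finset (Perm (Fin m))).val.map word = (List.range m).permutations' := by
  have nodup : ((univ : Finset (Perm (Fin m))).val.map word).Nodup :=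
    univ.nodup.map (word_injective m)
  refine Multiset.eq_of_le_of_card_le ((Multiset.le_iff_subset nodup).2 fun l hl => ?_) ?_
  · obtain ⟨e, -, rfl⟩ := Multiset.mem_map.1 hl
    have range_eq : List.range m = List.ofFn fun i : Fin m => (i : ℕ) := by
      simp [List.ofFn_eq_pmap]
    rw [Multiset.mem_coe, List.mem_permutations', range_eq]
    exact e.ofFn_comp_perm fun i : Fin m => (i : ℕ)
  · simp [← (List.permutations_perm_permutations' _).length_eq, List.length_permutations,
      Fintype.card_perm]

theorem map_excSum_eq_map_dropSum_word (m : ℕ) :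
    (univ : Finset (Perm (Fin m))).val.map excSum =
      (univ : Finset (Perm (Fin m))).val.map fun e => dropSum (word e) := by
  have h := congrArg (Multiset.map Prod.fst) (map_excSum_arrowMins_eq_map_permutations' m)
  rw [← map_univ_word] at h
  simpa only [Multiset.map_map, Function.comp_def] using h

/-! ### Signed sums -/

/-- A statistic of permutations of `{0, …, m - 1}`, for all `m`, that ignores a fixed first point
and does not change when the values `0` and `1` are exchanged, except that it is one larger for a
permutation beginning with `1` than for its partner beginning with `0`. -/
structure IsSwapCompatible (S : ∀ {m : ℕ}, Perm (Fin m) → ℕ) : Prop where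
  apply_one : S (1 : Perm (Fin 1)) = 0
  apply_decomposeFin_symm_zero {m : ℕ} (e : Perm (Fin m)) : S (decomposeFin.symm (0, e)) = S e
  apply_swap_mul {m : ℕ} (w : Perm (Fin (m + 2))) :
    S (swap 0 1 * w) + (if w 0 = 1 then 1 else 0) = S w + (if w 0 = 0 then 1 else 0)

theorem sum_sign_mul_eq_zero {α R : Type*} [Fintype α] [DecidableEq α] [Ring R] {i j : α}
    (hij : i ≠ j) (F : Perm α → R) (hF : ∀ w, F (swap i j * w) = F w) :
    ∑ w, ((sign w : ℤ) : R) * F w = 0 := by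
  refine sum_involution (fun w _ => swap i j * w) (fun w _ => ?_) (fun w _ _ => ?_)
    (fun _ _ => mem_univ _) (fun w _ => swap_mul_self_mul i j w)
  · simp [hF, sign_swap hij]
  · simpa using hij

/-- The permutations with first value `p`, identified with the permutations of one point less. -/
def decomposeFinFiber {m : ℕ} (p : Fin (m + 1)) :
    Perm (Fin m) ≃ {w : Perm (Fin (m + 1)) // w 0 = p} where
  toFun e := ⟨decomposeFin.symm (p, e), decomposeFin_symm_apply_zero p e⟩
  invFun w := (decomposeFin w.1).2
  left_inv e := by simp
  right_inv := by
    rintro ⟨w, rfl⟩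
    obtain ⟨⟨p, e⟩, rfl⟩ := decomposeFin.symm.surjective w
    simp

theorem decomposeFin_symm_one {m : ℕ} (e : Perm (Fin (m + 1))) :
    decomposeFin.symm (1, e) = swap 0 1 * decomposeFin.symm (0, e) := by
  ext i
  refine Fin.cases ?_ (fun i => ?_) i <;> simp

namespace IsSwapCompatible

variable {S : ∀ {m : ℕ}, Perm (Fin m) → ℕ}

theorem apply_decomposeFin_symm_one (hS : IsSwapCompatible S) {m : ℕ} (e : Perm (Fin (m + 1))) :
    S (decomposeFin.symm (1, e)) = S e + 1 := by
  have h := hS.apply_swap_mul (decomposeFin.symm (0, e))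
  rw [← decomposeFin_symm_one, hS.apply_decomposeFin_symm_zero] at h
  simpa using h

theorem sum_sign_mul_pow_succ {R : Type*} [CommRing R] (hS : IsSwapCompatible S) (x : R) (m : ℕ) :
    ∑ w : Perm (Fin (m + 2)), ((sign w : ℤ) : R) * x ^ S w =
      (1 - x) * ∑ e : Perm (Fin (m + 1)), ((sign e : ℤ) : R) * x ^ S e := by
  have split (w : Perm (Fin (m + 2))) : ((sign w : ℤ) : R) * x ^ S w =
      ((sign w : ℤ) : R) * x ^ (S w + if w 0 = 0 then 1 else 0) +
        if w 0 = 0 then (1 - x) * (((sign w : ℤ) : R) * x ^ S w) else 0 := by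
    split_ifs <;> ring
  have cancel : ∑ w : Perm (Fin (m + 2)),
      ((sign w : ℤ) : R) * x ^ (S w + if w 0 = 0 then 1 else 0) = 0 := by
    refine sum_sign_mul_eq_zero Fin.zero_ne_one _ fun w => ?_
    simp [← hS.apply_swap_mul w, swap_apply_eq_iff]
  have fixed : ∑ w : Perm (Fin (m + 2)) with w 0 = 0, ((sign w : ℤ) : R) * x ^ S w =
      ∑ e : Perm (Fin (m + 1)), ((sign e : ℤ) : R) * x ^ S e := by
    rw [← sum_subtype_eq_sum_filter, subtype_univ, ← (decomposeFinFiber 0).sum_comp]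
    simp [decomposeFinFiber, hS.apply_decomposeFin_symm_zero, decomposeFin.symm_sign]
  rw [sum_congr rfl fun w _ => split w, sum_add_distrib, cancel, zero_add, ← sum_filter,
    ← mul_sum, fixed]

theorem sum_sign_mul_pow {R : Type*} [CommRing R] (hS : IsSwapCompatible S) (x : R) (m : ℕ) :
    ∑ w : Perm (Fin (m + 1)), ((sign w : ℤ) : R) * x ^ S w = (1 - x) ^ m := by
  induction m with
  | zero => simp [hS.apply_one]
  | succ m ih => rw [hS.sum_sign_mul_pow_succ, ih, pow_succ']

end IsSwapCompatible

theorem two_mul_card_filter_units_eq {α : Type*} (A : Finset α) (ε : α → ℤˣ) (s : ℤˣ) :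
    2 * (#{a ∈ A | ε a = s} : ℤ) = #A + s * ∑ a ∈ A, (ε a : ℤ) := by
  rw [card_filter, card_eq_sum_ones, Nat.cast_sum, Nat.cast_sum, mul_sum, mul_sum,
    ← sum_add_distrib]
  refine sum_congr rfl fun a _ => ?_
  rcases Int.units_eq_one_or s with rfl | rfl <;>
    rcases Int.units_eq_one_or (ε a) with h | h <;> simp [h]

theorem exists_equiv_of_map_eq_of_sum_eq {α : Type*} [Fintype α] {S T : α → ℕ} {ε : α → ℤˣ}
    (hmap : (univ : Finset α).val.map S = (univ : Finset α).val.map T)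
    (hsum : ∑ a, ((ε a : ℤ) : ℤ[X]) * X ^ S a = ∑ a, ((ε a : ℤ) : ℤ[X]) * X ^ T a) :
    ∃ Φ : α ≃ α, ∀ a, ε (Φ a) = ε a ∧ T (Φ a) = S a := by
  have card_eq (k : ℕ) : #{a | k = S a} = #{a | k = T a} := by
    have h := congrArg (Multiset.count k) hmap
    rwa [Multiset.count_map, Multiset.count_map] at h
  have sum_eq (k : ℕ) : ∑ a with k = S a, (ε a : ℤ) = ∑ a with k = T a, (ε a : ℤ) := by
    simpa [finsetSum_coeff, coeff_X_pow, sum_filter] using congrArg (coeff · k) hsum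
  have card_fiber_eq (s : ℤˣ) (k : ℕ) :
      #{a | k = S a ∧ ε a = s} = #{a | k = T a ∧ ε a = s} := by
    have h : 2 * (#{a | k = S a ∧ ε a = s} : ℤ) = 2 * #{a | k = T a ∧ ε a = s} := by
      rw [← filter_filter, ← filter_filter, two_mul_card_filter_units_eq,
        two_mul_card_filter_units_eq, card_eq, sum_eq]
    exact_mod_cast mul_left_cancel₀ two_ne_zero h
  have fiber_equiv (c : ℕ × ℤˣ) :
      Nonempty ({a // (S a, ε a) = c} ≃ {a // (T a, ε a) = c}) := by
    rw [← Fintype.card_eq, Fintype.card_subtype, Fintype.card_subtype]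
    simpa only [Prod.ext_iff, eq_comm (b := c.1)] using card_fiber_eq c.2 c.1
  refine ⟨Equiv.ofFiberEquiv fun c => (fiber_equiv c).some, fun a => ?_⟩
  have h := Prod.ext_iff.1 (Equiv.ofFiberEquiv_map (fun c => (fiber_equiv c).some) a)
  exact ⟨h.2, h.1⟩

theorem IsSwapCompatible.exists_equiv_sign_eq {S T : ∀ {m : ℕ}, Perm (Fin m) → ℕ}
    (hS : IsSwapCompatible S) (hT : IsSwapCompatible T) {m : ℕ}
    (h : (univ : Finset (Perm (Fin (m + 1)))).val.map S =
      (univ : Finset (Perm (Fin (m + 1)))).val.map T) :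
    ∃ Φ : {w : Perm (Fin (m + 2)) // w 0 = 1} ≃ {w : Perm (Fin (m + 2)) // w 0 = 1},
      ∀ w, sign (Φ w).1 = sign w.1 ∧ T (Φ w).1 = S w.1 := by
  obtain ⟨Φ, hΦ⟩ := exists_equiv_of_map_eq_of_sum_eq h (ε := sign)
    ((hS.sum_sign_mul_pow X m).trans (hT.sum_sign_mul_pow X m).symm)
  refine ⟨(decomposeFinFiber 1).permCongr Φ, (decomposeFinFiber 1).forall_congr_right.1 fun e => ?_⟩
  obtain ⟨hsign, hval⟩ := hΦ e
  simp [decomposeFinFiber, permCongr_apply, hsign, hval, hS.apply_decomposeFin_symm_one,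
    hT.apply_decomposeFin_symm_one, decomposeFin.symm_sign]

theorem pred_swap_zero_one {m : ℕ} (x : Fin (m + 2)) :
    ((swap 0 1 x : Fin (m + 2)) : ℕ).pred = (x : ℕ).pred := by
  rw [swap_apply_def]
  split_ifs with h0 h1 <;> simp [*]

theorem excSum_swap_zero_one_mul {m : ℕ} (w : Perm (Fin (m + 2))) :
    excSum (swap 0 1 * w) + (w 0 : ℕ) = excSum w + (swap 0 1 (w 0) : Fin (m + 2)) := by
  have excSum_eq (v : Perm (Fin (m + 2))) :
      excSum v = v 0 + ∑ i : Fin (m + 1), ((v i.succ : ℕ).pred - i) := by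
    rw [excSum, Fin.sum_univ_succ, Fin.val_zero, Nat.sub_zero]
    refine congrArg _ (sum_congr rfl fun i _ => ?_)
    rw [Fin.val_succ, Nat.pred_eq_sub_one]
    omega
  simp only [excSum_eq, Perm.mul_apply, pred_swap_zero_one]
  ring

theorem isSwapCompatible_excSum : IsSwapCompatible excSum where
  apply_one := rfl
  apply_decomposeFin_symm_zero := excSum_decomposeFin_symm_zero
  apply_swap_mul w := by
    have h := excSum_swap_zero_one_mul w
    by_cases h0 : w 0 = 0
    · simpa [h0] using h
    by_cases h1 : w 0 = 1
    · simpa [h1] using h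
    · simpa [h0, h1, swap_apply_of_ne_of_ne] using h

theorem dropSum_ofFn {m : ℕ} (f : Fin (m + 1) → ℕ) :
    dropSum (List.ofFn f) = ∑ i : Fin m, (f i.castSucc - f i.succ) := by
  induction m with
  | zero => simp [dropSum]
  | succ m ih =>
    have h := ih fun i => f i.succ
    rw [List.ofFn_succ] at h
    rw [List.ofFn_succ, List.ofFn_succ, dropSum, h, Fin.sum_univ_succ]
    rfl

theorem dropSum_word_add_ite {m : ℕ} (w : Perm (Fin (m + 1))) :
    dropSum (word w) + (if w 0 = 0 then 1 else 0) =
      ∑ i : Fin m, ((w i.castSucc : ℕ).pred - (w i.succ : ℕ).pred) + 1 := by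
  have drop (i : Fin m) : (w i.castSucc : ℕ) - w i.succ =
      ((w i.castSucc : ℕ).pred - (w i.succ : ℕ).pred) + if w i.succ = 0 then 1 else 0 := by
    have ne : (w i.castSucc : ℕ) ≠ w i.succ :=
      Fin.val_ne_of_ne (w.injective.ne i.castSucc_lt_succ.ne)
    simp only [Fin.ext_iff, Fin.val_zero, Nat.pred_eq_sub_one]
    split_ifs <;> omega
  have one_zero : ∑ i, (if w i = 0 then 1 else 0) = 1 := by
    rw [Equiv.sum_comp w fun x => if x = 0 then 1 else 0]
    simp
  rw [Fin.sum_univ_succ] at one_zero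
  rw [word, dropSum_ofFn, sum_congr rfl fun i _ => drop i, sum_add_distrib, add_assoc,
    add_comm (∑ i : Fin m, if w i.succ = 0 then 1 else 0), one_zero]

theorem isSwapCompatible_dropSum_word : IsSwapCompatible fun e => dropSum (word e) where
  apply_one := rfl
  apply_decomposeFin_symm_zero e := by
    have h : word (decomposeFin.symm (0, e)) = 0 :: (word e).map Nat.succ := by
      simp [word, List.ofFn_succ, List.map_ofFn, Function.comp_def]
    rw [h, dropSum_zero_cons, dropSum_map_succ]
  apply_swap_mul w := by
    have h := (dropSum_word_add_ite (swap 0 1 * w)).trans (Eq.trans (by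
      simp only [Perm.mul_apply, pred_swap_zero_one]) (dropSum_word_add_ite w).symm)
    simpa [swap_apply_eq_iff] using h

/-! ### One-line notation -/

theorem oneLine_succ {n : ℕ} (π : Perm (Fin n)) (i : Fin n) :
    oneLine π (i + 1) = π i + 1 := by
  simp [oneLine]

theorem oneLine_one_eq_two_iff {m : ℕ} (w : Perm (Fin (m + 2))) : oneLine w 1 = 2 ↔ w 0 = 1 := by
  have h : oneLine w 1 = w 0 + 1 := oneLine_succ w 0
  rw [h, Fin.ext_iff, Fin.val_one, Nat.add_right_cancel_iff (n := 1)]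

@[to_additive]
theorem prod_Icc_eq_prod_fin {M : Type*} [CommMonoid M] (n : ℕ) (f : ℕ → M) :
    ∏ i ∈ Icc 1 n, f i = ∏ i : Fin n, f (i + 1) := by
  rw [Fin.prod_univ_eq_prod_range fun i => f (i + 1), range_eq_Ico, prod_Ico_add' f 0 n 1]
  rfl

theorem depthStat_eq_excSum {n : ℕ} (π : Perm (Fin n)) : depthStat π = excSum π := by
  rw [depthStat, sum_filter, sum_Icc_eq_sum_fin, excSum]
  refine sum_congr rfl fun i _ => ?_
  rw [oneLine_succ]
  split_ifs <;> omega

theorem drpStat_eq_dropSum_word {m : ℕ} (π : Perm (Fin (m + 1))) :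
    drpStat π = dropSum (word π) := by
  rw [drpStat, sum_filter, Nat.add_sub_cancel, sum_Icc_eq_sum_fin, word, dropSum_ofFn]
  refine sum_congr rfl fun i _ => ?_
  have here : oneLine π (i + 1) = π i.castSucc + 1 := oneLine_succ π i.castSucc
  have next : oneLine π (i + 1 + 1) = π i.succ + 1 := oneLine_succ π i.succ
  rw [here, next]
  split_ifs <;> omega

theorem neg_one_pow_invNum {n : ℕ} (π : Perm (Fin n)) : (-1 : ℤ) ^ invNum π = sign π := by
  rw [invNum, ← prod_const, prod_filter, prod_product_right, sign_eq_prod_prod_Iio,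
    prod_Icc_eq_prod_fin, Units.coe_prod]
  refine prod_congr rfl fun j _ => ?_
  rw [prod_Icc_eq_prod_fin, Units.coe_prod, ← filter_gt_eq_Iio, prod_filter]
  refine prod_congr rfl fun i _ => ?_
  simp only [oneLine_succ, add_lt_add_iff_right, Fin.val_fin_lt]
  by_cases hij : i < j
  · rcases lt_or_gt_of_ne (π.injective.ne hij.ne) with h | h <;> simp [hij, h, h.not_gt]
  · simp [hij]

/-- on A₂ = {w : w(1) = 2} there is a sign-preserving bijection
carrying depth to drp. -/
theorem stmt14 (n : ℕ) (hn : 2 ≤ n) :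
    ∃ Ψ : {w : Equiv.Perm (Fin n) // oneLine w 1 = 2} →
          {w : Equiv.Perm (Fin n) // oneLine w 1 = 2},
      Function.Bijective Ψ ∧
        ∀ w : {w : Equiv.Perm (Fin n) // oneLine w 1 = 2},
          ((-1 : ℤ) ^ invNum (Ψ w).1 = (-1 : ℤ) ^ invNum w.1) ∧
          depthStat w.1 = drpStat (Ψ w).1 := by
  obtain ⟨m, rfl⟩ := Nat.exists_eq_add_of_le' hn
  simp only [neg_one_pow_invNum, depthStat_eq_excSum, drpStat_eq_dropSum_word]
  let ι := subtypeEquivRight (oneLine_one_eq_two_iff (m := m))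
  obtain ⟨Φ, hΦ⟩ := isSwapCompatible_excSum.exists_equiv_sign_eq
    isSwapCompatible_dropSum_word (map_excSum_eq_map_dropSum_word (m + 1))
  refine ⟨ι.permCongr.symm Φ, Equiv.bijective _, fun w => ?_⟩
  obtain ⟨sign_eq, dropSum_eq⟩ := hΦ (ι w)
  exact ⟨congrArg _ sign_eq, dropSum_eq.symm⟩
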